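/- Let W = ⟨S|M⟩ be a finite rank Coxeter system, let u, w ∈ S and let v ∈ W satisfy |v| ≤ |uv| and |v| ≤ |vw|. Then uv = vw if and only if either v = e and u = w, or there exist k ≥ 1 and indices i_1,j_1,…,i_k,j_k with i_l ≠ j_l and m_{i_l,j_l} < ∞ such that v = r_{i_1,j_1}⋯r_{i_k,j_k} is a reduced expression (i.e. |v| = Σ_l |r_{i_l,j_l}|), u = c_{i_1,j_1}, w = d_{i_k,j_k}, and for every l = 1,…,k−1: c_{i_{l+1},j_{l+1}} = d_{i_l,j_l}, a_{i_{l+1},j_{l+1}} ∉ {s_{i_l}, s_{j_l}}, and b_{i_l,j_l} ∉ {s_{i_{l+1}}, s_{j_{l+1}}}. -/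

import Mathlib

open CoxeterSystem

/-- The alternating word `[i, j, i, j, …]` of length `n`, starting with `i`. -/
def altWord {B : Type*} (i j : B) : ℕ → List B
  | 0 => []
  | n + 1 => i :: altWord j i n

/-- For `i ≠ j` with `M i j < ∞` (encoded `M i j ≠ 0`), the word
`r_{i,j}`: the alternating word starting with `s_i` of length `m_{i,j} − 1`.
(For `m` even this is `s_i(s_j s_i)^{m/2 − 1}`; for `m` odd it is `(s_i s_j)^{(m−1)/2}`.) -/
def rWord {B : Type*} (M : CoxeterMatrix B) (i j : B) : List B :=
  altWord i j (M i j - 1)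

/-- The last letter `b_{i,j}` of `r_{i,j}`: `s_i` if `m_{i,j}` is even, `s_j` if odd. -/
def bIdx {B : Type*} (M : CoxeterMatrix B) (i j : B) : B :=
  if Even (M i j) then i else j

/-- The letter `d_{i,j}`: `s_j` if `m_{i,j}` is even, `s_i` if odd; it satisfies
`c_{i,j} r_{i,j} = r_{i,j} d_{i,j}` where `a_{i,j} = s_i` and `c_{i,j} = s_j`. -/
def dIdx {B : Type*} (M : CoxeterMatrix B) (i j : B) : B :=
  if Even (M i j) then j else i


section RightInversionParity

namespace CoxeterSystem

variable {B : Type*} {M : CoxeterMatrix B} {W : Type*} [Group W] (cs : CoxeterSystem M W)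

open Classical in
/-- The action of a simple reflection on `W × ZMod 2` by conjugation on the first component,
flipping the second one at the reflection itself. -/
noncomputable def signedConj (i : B) : Function.End (W × ZMod 2) :=
  fun p => (cs.simple i * p.1 * cs.simple i, p.2 + if p.1 = cs.simple i then 1 else 0)

open Classical in
theorem signedConj_mul_pow_apply (i i' : B) (n : ℕ) (t : W) (e : ZMod 2) :
    ((cs.signedConj i * cs.signedConj i') ^ n) (t, e) =
      ((cs.simple i * cs.simple i') ^ n * t * ((cs.simple i * cs.simple i') ^ n)⁻¹,
        e + ∑ k ∈ Finset.range (2 * n),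
          if t = cs.simple i' * (cs.simple i * cs.simple i') ^ k then 1 else 0) := by
  induction n with
  | zero => simp; rfl
  | succ n ih =>
    have hstep : ((cs.signedConj i * cs.signedConj i') ^ (n + 1)) (t, e) =
        cs.signedConj i (cs.signedConj i' (((cs.signedConj i * cs.signedConj i') ^ n) (t, e))) := by
      rw [pow_succ']; rfl
    rw [hstep, ih]
    set r := cs.simple i * cs.simple i' with hr
    have hrinv : r⁻¹ = cs.simple i' * cs.simple i := by simp [hr]
    have hconj : ∀ k : ℕ, (r ^ k)⁻¹ * cs.simple i' = cs.simple i' * r ^ k := by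
      intro k
      induction k with
      | zero => simp
      | succ k ihk =>
        rw [pow_succ' r k, mul_inv_rev, mul_assoc, hrinv,
          show cs.simple i' * cs.simple i * cs.simple i' = cs.simple i' * r by rw [hr, mul_assoc],
          ← mul_assoc, ihk, mul_assoc, ← pow_succ, pow_succ']
    have h1 : r ^ n * t * (r ^ n)⁻¹ = cs.simple i' ↔ t = cs.simple i' * r ^ (2 * n) := by
      rw [two_mul, pow_add, ← mul_assoc, ← hconj]
      constructor
      · intro h; rw [← h]; group
      · intro h; rw [h]; group
    have h2 : cs.simple i' * (r ^ n * t * (r ^ n)⁻¹) * cs.simple i' = cs.simple i ↔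
        t = cs.simple i' * r ^ (2 * n + 1) := by
      have h3 : ∀ x, cs.simple i' * x * cs.simple i' = cs.simple i ↔
          x = cs.simple i' * (cs.simple i * cs.simple i') := by
        intro x
        constructor
        · intro h
          rw [← h]; simp [mul_assoc]
        · intro h
          rw [h]; simp [mul_assoc]
      rw [h3, ← hr, show 2 * n + 1 = n + (1 + n) by ring, pow_add, ← mul_assoc (cs.simple i') (r ^ n),
        ← hconj, pow_add, pow_one]
      constructor
      · intro h
        rw [mul_assoc, ← mul_assoc (cs.simple i'), ← h]; group
      · intro h; rw [h]; group
    rw [show 2 * (n + 1) = 2 * n + 1 + 1 by ring, Finset.sum_range_succ, Finset.sum_range_succ]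
    simp only [signedConj, h1, h2]
    refine Prod.ext ?_ ?_
    · simp only [pow_succ', mul_inv_rev, hrinv]
      simp [hr, mul_assoc]
    · simp only [add_assoc]

theorem isLiftable_signedConj : M.IsLiftable cs.signedConj := by
  classical
  intro i i'
  funext p
  obtain ⟨t, e⟩ := p
  rw [signedConj_mul_pow_apply, two_mul, Finset.sum_range_add]
  simp only [pow_add, simple_mul_simple_pow, one_mul]
  rw [CharTwo.add_self_eq_zero]
  simp
  rfl

/-- The action of a Coxeter group on `W × ZMod 2` whose second component records the parity of
the number of occurrences of an element in a right inversion sequence. -/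
noncomputable def signedConjHom : W →* Function.End (W × ZMod 2) :=
  cs.lift ⟨cs.signedConj, cs.isLiftable_signedConj⟩

theorem signedConjHom_mul_apply (v w : W) (p : W × ZMod 2) :
    cs.signedConjHom (v * w) p = cs.signedConjHom v (cs.signedConjHom w p) := by
  rw [map_mul]; rfl

theorem signedConjHom_simple (i : B) : cs.signedConjHom (cs.simple i) = cs.signedConj i :=
  cs.lift_apply_simple _ i

open Classical in
theorem signedConjHom_wordProd_apply (ω : List B) (t : W) (e : ZMod 2) :
    cs.signedConjHom (cs.wordProd ω) (t, e) =
      (cs.wordProd ω * t * (cs.wordProd ω)⁻¹, e + ((cs.rightInvSeq ω).count t : ZMod 2)) := by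
  induction ω with
  | nil => simp; rfl
  | cons i ω ih =>
    rw [wordProd_cons, signedConjHom_mul_apply, ih, signedConjHom_simple]
    have h : cs.wordProd ω * t * (cs.wordProd ω)⁻¹ = cs.simple i ↔
        (cs.wordProd ω)⁻¹ * cs.simple i * cs.wordProd ω = t := by
      constructor
      · intro h; rw [← h]; group
      · intro h; rw [← h]; group
    simp only [signedConj, rightInvSeq, List.count_cons, h, beq_iff_eq]
    refine Prod.ext ?_ ?_
    · simp [mul_assoc]
    · push_cast
      ring

open Classical in
/-- The exchange property: a right descent of `π ω` occurs in the right inversion sequence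
of `ω`, whether or not `ω` is reduced. -/
theorem simple_mem_rightInvSeq {ω : List B} {i : B} (h : cs.IsRightDescent (cs.wordProd ω) i) :
    cs.simple i ∈ cs.rightInvSeq ω := by
  by_contra hmem
  obtain ⟨ω', hω', heq⟩ := cs.exists_isReduced (cs.wordProd ω * cs.simple i)
  have hcount : ((cs.rightInvSeq ω').count (cs.simple i) : ZMod 2) = 1 := by
    have h1 := cs.signedConjHom_wordProd_apply ω' (cs.simple i) 0
    rw [← heq, signedConjHom_mul_apply, signedConjHom_simple] at h1
    simp only [signedConj, if_true, simple_mul_simple_self, one_mul, signedConjHom_wordProd_apply,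
      List.count_eq_zero_of_not_mem hmem] at h1
    simpa using (congrArg Prod.snd h1).symm
  have hmem' : cs.simple i ∈ cs.rightInvSeq ω' := by
    by_contra hn
    rw [List.count_eq_zero_of_not_mem hn] at hcount
    simp at hcount
  have h2 := (cs.isRightInversion_of_mem_rightInvSeq hω' hmem').2
  rw [← heq, simple_mul_simple_cancel_right] at h2
  exact lt_asymm h h2

theorem simple_mem_leftInvSeq {ω : List B} {i : B} (h : cs.IsLeftDescent (cs.wordProd ω) i) :
    cs.simple i ∈ cs.leftInvSeq ω := by
  rw [← isRightDescent_inv_iff, ← wordProd_reverse] at h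
  simpa [rightInvSeq_reverse] using cs.simple_mem_rightInvSeq h

theorem leftInvSeq_append (ω ω' : List B) :
    cs.leftInvSeq (ω ++ ω') =
      cs.leftInvSeq ω ++ (cs.leftInvSeq ω').map (MulAut.conj (cs.wordProd ω)) := by
  induction ω with
  | nil => simp
  | cons i ω ih => simp [leftInvSeq, ih, wordProd_cons]

end CoxeterSystem

end RightInversionParity

section GeometricRepresentation

open Module Polynomial Polynomial.Chebyshev

variable {B : Type*} (M : CoxeterMatrix B)

namespace CoxeterMatrix

/-- Twice the entry of the canonical bilinear form of a Coxeter matrix; the convention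
`π / 0 = 0` gives the value `-2` at pairs of infinite order. -/
noncomputable def cosEntry (i j : B) : ℝ := -2 * Real.cos (Real.pi / M i j)

/-- The simple coroot of index `i`, a linear form on the free space on `B`. -/
noncomputable def simpleCoroot (i : B) : Dual ℝ (B →₀ ℝ) :=
  Finsupp.linearCombination ℝ (M.cosEntry i)

theorem simpleCoroot_single (i j : B) :
    M.simpleCoroot i (Finsupp.single j 1) = M.cosEntry i j := by
  simp [simpleCoroot]

theorem simpleCoroot_single_self (i : B) :
    M.simpleCoroot i (Finsupp.single i 1) = 2 := by
  simp [simpleCoroot_single, cosEntry]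

theorem cosEntry_comm (i j : B) : M.cosEntry i j = M.cosEntry j i := by
  simp [cosEntry, M.symmetric i j]

/-- The simple reflection of index `i` in the geometric representation. -/
noncomputable def geomReflection (i : B) : (B →₀ ℝ) ≃ₗ[ℝ] (B →₀ ℝ) :=
  reflection (M.simpleCoroot_single_self i)

theorem cosEntry_mul_sub_two (i j : B) :
    M.cosEntry i j * M.cosEntry j i - 2 = 2 * Real.cos (2 * (Real.pi / M i j)) := by
  rw [M.cosEntry_comm j i, cosEntry, Real.cos_two_mul]
  ring

theorem two_le_of_ne {i j : B} (hij : i ≠ j) (h0 : M i j ≠ 0) : 2 ≤ M i j := by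
  have := M.off_diagonal i j hij
  omega

theorem three_le_of_ne {i j : B} (hij : i ≠ j) (h0 : M i j ≠ 0) (h2 : M i j ≠ 2) :
    3 ≤ M i j := by
  have := M.two_le_of_ne hij h0
  omega

theorem sin_two_mul_pi_div_pos {m : ℕ} (hm : 3 ≤ m) : 0 < Real.sin (2 * (Real.pi / m)) := by
  have hm' : (3 : ℝ) ≤ m := by exact_mod_cast hm
  apply Real.sin_pos_of_pos_of_lt_pi
  · positivity
  · rw [← mul_div_assoc, div_lt_iff₀ (by positivity)]
    nlinarith [Real.pi_pos]

theorem geomReflection_mul_pow_apply_single (i j : B) (n : ℕ) :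
    ((M.geomReflection i * M.geomReflection j) ^ n) (Finsupp.single i 1) =
      ((S ℝ n).eval (2 * Real.cos (2 * (Real.pi / M i j))) +
        (S ℝ (n - 1)).eval (2 * Real.cos (2 * (Real.pi / M i j)))) • Finsupp.single i 1 +
      ((S ℝ (n - 1)).eval (2 * Real.cos (2 * (Real.pi / M i j))) * -M.cosEntry j i) •
        Finsupp.single j 1 := by
  have h := reflection_mul_reflection_pow_apply_self (M.simpleCoroot_single_self i)
    (M.simpleCoroot_single_self j) n _ rfl
  simp only [simpleCoroot_single, cosEntry_mul_sub_two] at h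
  exact h

theorem isLiftable_geomReflection : M.IsLiftable M.geomReflection := by
  intro i j
  by_cases hij : i = j
  · subst hij
    rw [M.diagonal, pow_one]
    ext1 z
    exact involutive_reflection (M.simpleCoroot_single_self i) z
  by_cases h0 : M i j = 0
  · rw [h0, pow_zero]
  refine LinearEquiv.ext fun z => ?_
  by_cases h2 : M i j = 2
  · have hk : M.cosEntry i j = 0 := by simp [cosEntry, h2]
    have hk' : M.cosEntry j i = 0 := by rw [cosEntry_comm, hk]
    rw [h2, pow_two]
    simp only [LinearEquiv.mul_apply, geomReflection, reflection_apply, map_sub, map_smul,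
      simpleCoroot_single_self, simpleCoroot_single, hk, hk', LinearEquiv.coe_one, id_eq]
    match_scalars <;> norm_num
  have h3 := M.three_le_of_ne hij h0 h2
  have hsin := sin_two_mul_pi_div_pos h3
  have hS := fun n : ℤ => S_two_mul_real_cos (2 * (Real.pi / M i j)) n
  have h := reflection_mul_reflection_pow_apply (M.simpleCoroot_single_self i)
    (M.simpleCoroot_single_self j) (M i j) z _ rfl
  simp only [simpleCoroot_single, cosEntry_mul_sub_two] at h
  change ((M.geomReflection i * M.geomReflection j) ^ M i j) z = z
  rw [geomReflection, geomReflection, h]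
  have hne : (M i j : ℝ) ≠ 0 := by exact_mod_cast h0
  have hθ : (M i j : ℝ) * (2 * (Real.pi / M i j)) = 2 * Real.pi := by field_simp
  generalize 2 * (Real.pi / M i j) = θ at *
  obtain ⟨p, hp⟩ | ⟨p, hp⟩ := Nat.even_or_odd (M i j)
  · rw [hp] at hθ ⊢
    push_cast at hθ ⊢
    rw [show ((p : ℤ) + p - 2) / 2 = p - 1 by omega, show ((p : ℤ) + p - 1) / 2 = p - 1 by omega]
    have hzero : (S ℝ (p - 1)).eval (2 * Real.cos θ) = 0 := by
      have hp' := hS (p - 1)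
      push_cast at hp'
      rw [show ((p : ℝ) - 1 + 1) * θ = Real.pi by linarith, Real.sin_pi] at hp'
      exact (mul_eq_zero.mp hp').resolve_right hsin.ne'
    simp [hzero]
  · rw [hp] at hθ ⊢
    push_cast at hθ ⊢
    rw [show (2 * (p : ℤ) + 1 - 2) / 2 = p - 1 by omega,
      show (2 * (p : ℤ) + 1 - 1) / 2 = p by omega,
      show (2 * (p : ℤ) + 1 - 3) / 2 = p - 1 by omega,
      show (2 * (p : ℤ) + 1) / 2 = p by omega]
    have hzero : (S ℝ p).eval (2 * Real.cos θ) + (S ℝ (p - 1)).eval (2 * Real.cos θ) = 0 := by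
      have h1 := hS p
      have h2 := hS (p - 1)
      push_cast at h1 h2
      rw [show ((p : ℝ) + 1) * θ = 2 * Real.pi - p * θ by linarith, Real.sin_two_pi_sub] at h1
      rw [sub_add_cancel] at h2
      refine (mul_eq_zero.mp ?_).resolve_right hsin.ne'
      rw [add_mul, h1, h2, neg_add_cancel]
    simp [hzero]

theorem geomReflection_mul_pow_ne_one {i j : B} (hij : i ≠ j) {n : ℕ} (hn : 0 < n)
    (hM : M i j = 0 ∨ n < M i j) :
    (M.geomReflection i * M.geomReflection j) ^ n ≠ 1 := by
  intro h
  have h1 := M.geomReflection_mul_pow_apply_single i j n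
  rw [h] at h1
  have hi := DFunLike.congr_fun h1 i
  have hj := DFunLike.congr_fun h1 j
  simp [hij, hij.symm] at hi hj
  by_cases h0 : M i j = 0
  · simp [h0, cosEntry, M.symmetric j i, S_eval_two] at hj
    omega
  by_cases h2 : M i j = 2
  · obtain rfl : n = 1 := by omega
    norm_num [h2, show 2 * (Real.pi / 2) = Real.pi by ring] at hi
  have h3 := M.three_le_of_ne hij h0 h2
  have hlt : n < M i j := hM.resolve_left h0
  have hm' : (3 : ℝ) ≤ M i j := by exact_mod_cast h3
  have hsin := sin_two_mul_pi_div_pos h3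
  have hS := fun n : ℤ => S_two_mul_real_cos (2 * (Real.pi / M i j)) n
  have hk : M.cosEntry j i ≠ 0 := by
    rw [cosEntry_comm, cosEntry]
    have : 0 < Real.cos (Real.pi / M i j) := by
      apply Real.cos_pos_of_mem_Ioo
      have : Real.pi / M i j < Real.pi / 2 :=
        div_lt_div_of_pos_left Real.pi_pos two_pos (by linarith)
      constructor
      · have : 0 < Real.pi / M i j := by positivity
        linarith [Real.pi_pos]
      · exact this
    simpa using this.ne'
  have hS0 := hj.resolve_right hk
  rw [hS0, add_zero] at hi
  have h4 := hS (n - 1)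
  have h5 := hS n
  rw [hS0] at h4
  rw [← hi] at h5
  push_cast at h4 h5
  rw [zero_mul, sub_add_cancel] at h4
  rw [add_mul, Real.sin_add, ← h4, zero_mul, zero_add, one_mul, one_mul] at h5
  have hcos : Real.cos (n * (2 * (Real.pi / M i j))) = 1 :=
    mul_right_cancel₀ hsin.ne' (by rw [one_mul]; exact h5.symm)
  obtain ⟨q, hq⟩ := (Real.cos_eq_one_iff _).mp hcos
  have hqn : (q : ℝ) * M i j = n := by
    field_simp at hq
    linarith
  have hqn' : q * (M i j : ℤ) = n := by exact_mod_cast hqn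
  have hq0 : 0 < q := by
    by_contra hq0
    nlinarith
  nlinarith

end CoxeterMatrix

end GeometricRepresentation

section Dihedral

namespace CoxeterSystem

variable {B : Type*} {M : CoxeterMatrix B} {W : Type*} [Group W] (cs : CoxeterSystem M W)

theorem simple_mul_simple_pow_ne_one {i j : B} (hij : i ≠ j) {n : ℕ} (hn : 0 < n)
    (hM : M i j = 0 ∨ n < M i j) : (cs.simple i * cs.simple j) ^ n ≠ 1 := by
  intro h
  apply M.geomReflection_mul_pow_ne_one hij hn hM
  have h' := congrArg (cs.lift ⟨M.geomReflection, M.isLiftable_geomReflection⟩) h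
  simpa only [map_pow, map_mul, lift_apply_simple, map_one] using h'

theorem simple_injective : Function.Injective cs.simple := by
  intro i j h
  by_contra hij
  refine cs.simple_mul_simple_pow_ne_one hij one_pos ?_ (by rw [h, pow_one, simple_mul_simple_self])
  have := M.off_diagonal i j hij
  omega

theorem length_altWord (i j : B) (n : ℕ) : (altWord i j n).length = n := by
  induction n generalizing i j with
  | zero => rfl
  | succ n ih => simp [altWord, ih]

theorem altWord_succ_eq_append (i j : B) (n : ℕ) :
    altWord i j (n + 1) = altWord i j n ++ [if Even n then i else j] := by
  induction n generalizing i j with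
  | zero => simp [altWord]
  | succ n ih =>
    rw [altWord, ih, altWord]
    by_cases h : Even n <;> simp [Nat.even_add_one, h]

theorem reverse_altWord (i j : B) (n : ℕ) : (altWord i j n).reverse = alternatingWord j i n := by
  induction n generalizing i j with
  | zero => rfl
  | succ n ih => simp [altWord, ih, alternatingWord]

theorem wordProd_altWord_comm (i j : B) :
    cs.wordProd (altWord i j (M i j)) = cs.wordProd (altWord j i (M i j)) := by
  rw [← inv_inj, ← wordProd_reverse, ← wordProd_reverse, reverse_altWord, reverse_altWord]
  have h := cs.wordProd_braidWord_eq j i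
  rwa [braidWord, braidWord, M.symmetric j i] at h

theorem exists_eq_of_mem_leftInvSeq_altWord {i j : B} {n : ℕ} {t : W}
    (ht : t ∈ cs.leftInvSeq (altWord i j n)) :
    ∃ k < n, t = (cs.simple i * cs.simple j) ^ k * cs.simple i := by
  induction n generalizing i j t with
  | zero => simp [altWord] at ht
  | succ n ih =>
    rw [altWord, leftInvSeq, List.mem_cons, List.mem_map] at ht
    obtain rfl | ⟨t', ht', rfl⟩ := ht
    · exact ⟨0, n.succ_pos, by simp⟩
    · obtain ⟨k, hk, rfl⟩ := ih ht'
      refine ⟨k + 1, by omega, ?_⟩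
      have h : cs.simple i * (cs.simple j * cs.simple i) ^ k =
          (cs.simple i * cs.simple j) ^ k * cs.simple i := by
        clear hk ht'
        induction k with
        | zero => simp
        | succ k ihk => rw [pow_succ, ← mul_assoc, ihk, pow_succ]; simp only [mul_assoc]
      rw [MulAut.conj_apply, inv_simple, ← mul_assoc, h, pow_succ]
      simp only [mul_assoc]

theorem simple_notMem_leftInvSeq_altWord {i j : B} (hij : i ≠ j) {n : ℕ}
    (hM : M i j = 0 ∨ n < M i j) : cs.simple i ∉ cs.leftInvSeq (altWord j i n) := by
  intro h
  obtain ⟨k, hk, hik⟩ := cs.exists_eq_of_mem_leftInvSeq_altWord h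
  refine cs.simple_mul_simple_pow_ne_one hij.symm k.succ_pos
    (by rw [M.symmetric j i]; omega) ?_
  rw [pow_succ, ← mul_assoc, ← hik, simple_mul_simple_self]

theorem exists_eq_altWord_mul_of_isLeftDescent {x : W} {n : ℕ} {i j : B} (hij : i ≠ j)
    (hM : M i j = 0 ∨ n ≤ M i j) (hi : cs.IsLeftDescent x i) (hj : cs.IsLeftDescent x j) :
    ∃ y, x = cs.wordProd (altWord i j n) * y ∧ cs.length x = n + cs.length y := by
  induction n generalizing i j with
  | zero => exact ⟨x, by simp [altWord]⟩
  | succ n ih =>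
    obtain ⟨y, rfl, hlen⟩ := ih hij.symm (by rw [M.symmetric j i]; omega) hj hi
    obtain ⟨ω, hω, rfl⟩ := cs.exists_isReduced y
    have hmem : cs.simple i ∈ cs.leftInvSeq (altWord j i n ++ ω) := by
      apply cs.simple_mem_leftInvSeq
      rwa [wordProd_append]
    rw [leftInvSeq_append, List.mem_append] at hmem
    obtain ⟨t, ht, hit⟩ := List.mem_map.mp
      (hmem.resolve_left (cs.simple_notMem_leftInvSeq_altWord hij (by omega)))
    have hlt := (cs.isLeftInversion_of_mem_leftInvSeq hω ht).2
    have heq : cs.wordProd (altWord j i n) * cs.wordProd ω =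
        cs.wordProd (altWord i j (n + 1)) * (t * cs.wordProd ω) := by
      have h1 : cs.simple i * (cs.wordProd (altWord j i n) * cs.wordProd ω) =
          cs.wordProd (altWord j i n) * (t * cs.wordProd ω) := by
        rw [← hit, MulAut.conj_apply]; group
      rw [altWord, wordProd_cons, mul_assoc, ← h1, simple_mul_simple_cancel_left]
    refine ⟨t * cs.wordProd ω, heq, ?_⟩
    have h2 := cs.length_mul_le (cs.wordProd (altWord i j (n + 1))) (t * cs.wordProd ω)
    have h3 := cs.length_wordProd_le (altWord i j (n + 1))
    rw [length_altWord] at h3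
    rw [← heq] at h2
    omega

theorem ne_zero_of_isLeftDescent {x : W} {i j : B} (hij : i ≠ j) (hi : cs.IsLeftDescent x i)
    (hj : cs.IsLeftDescent x j) : M i j ≠ 0 := by
  intro h0
  obtain ⟨y, -, hlen⟩ := cs.exists_eq_altWord_mul_of_isLeftDescent
    (n := cs.length x + 1) hij (Or.inl h0) hi hj
  omega

theorem altWord_eq_rWord_append {i j : B} (h0 : M i j ≠ 0) :
    altWord i j (M i j) = rWord M i j ++ [dIdx M i j] := by
  obtain ⟨m, hm⟩ := Nat.exists_eq_succ_of_ne_zero h0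
  rw [rWord, dIdx, hm, Nat.succ_sub_one, Nat.succ_eq_add_one, altWord_succ_eq_append]
  by_cases h : Even m <;> simp [Nat.even_add_one, h]

theorem altWord_eq_cons_rWord {i j : B} (h0 : M i j ≠ 0) :
    altWord j i (M i j) = j :: rWord M i j := by
  obtain ⟨m, hm⟩ := Nat.exists_eq_succ_of_ne_zero h0
  rw [rWord, hm, Nat.succ_sub_one, altWord]

theorem simple_mul_wordProd_rWord {i j : B} (h0 : M i j ≠ 0) :
    cs.simple j * cs.wordProd (rWord M i j) =
      cs.wordProd (rWord M i j) * cs.simple (dIdx M i j) := by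
  rw [← wordProd_cons, ← altWord_eq_cons_rWord h0, ← wordProd_altWord_comm,
    altWord_eq_rWord_append h0, wordProd_append, wordProd_singleton]

theorem rWord_eq_append {i j : B} (hij : i ≠ j) (h0 : M i j ≠ 0) :
    rWord M i j = altWord i j (M i j - 2) ++ [bIdx M i j] := by
  obtain ⟨m, hm⟩ := Nat.exists_eq_add_of_le' (M.two_le_of_ne hij h0)
  rw [rWord, bIdx, hm, show m + 2 - 1 = m + 1 by omega, show m + 2 - 2 = m by omega,
    altWord_succ_eq_append]
  simp [Nat.even_add]

theorem rWord_eq_cons {i j : B} (hij : i ≠ j) (h0 : M i j ≠ 0) :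
    rWord M i j = i :: altWord j i (M i j - 2) := by
  obtain ⟨m, hm⟩ := Nat.exists_eq_add_of_le' (M.two_le_of_ne hij h0)
  rw [rWord, hm, show m + 2 - 1 = m + 1 by omega, show m + 2 - 2 = m by omega, altWord]

theorem length_rWord (i j : B) : (rWord M i j).length = M i j - 1 := length_altWord _ _ _

theorem bIdx_ne_of_isLeftDescent {i j a : B} (hij : i ≠ j) (h0 : M i j ≠ 0) {y : W}
    (hlen : M i j - 1 + cs.length y ≤ cs.length (cs.wordProd (rWord M i j) * y))
    (ha : cs.IsLeftDescent y a) : bIdx M i j ≠ a := by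
  rintro rfl
  rw [rWord_eq_append hij h0, wordProd_append, wordProd_singleton, mul_assoc] at hlen
  have h1 := cs.length_mul_le (cs.wordProd (altWord i j (M i j - 2)))
    (cs.simple (bIdx M i j) * y)
  have h2 := cs.length_wordProd_le (altWord i j (M i j - 2))
  rw [length_altWord] at h2
  have h3 := M.two_le_of_ne hij h0
  unfold IsLeftDescent at ha
  omega

theorem exists_eq_rWord_mul {u w : B} {v : W} (huw : cs.simple u * v = v * cs.simple w)
    (hu : cs.length v ≤ cs.length (cs.simple u * v)) (hv : v ≠ 1) :
    ∃ i y, i ≠ u ∧ M i u ≠ 0 ∧ v = cs.wordProd (rWord M i u) * y ∧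
      cs.length v = M i u - 1 + cs.length y := by
  obtain ⟨i, hi⟩ := cs.exists_leftDescent_of_ne_one hv
  have hne : i ≠ u := by
    rintro rfl
    exact absurd hi (not_lt.mpr hu)
  have hlt : cs.length v < cs.length (cs.simple u * v) :=
    lt_of_le_of_ne hu (cs.length_simple_mul_ne v u).symm
  have hxu : cs.IsLeftDescent (cs.simple u * v) u := by
    rwa [IsLeftDescent, simple_mul_simple_cancel_left]
  have hxi : cs.IsLeftDescent (cs.simple u * v) i := by
    have h1 := cs.length_mul_le (cs.simple i * v) (cs.simple w)
    rw [length_simple, mul_assoc, ← huw] at h1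
    unfold IsLeftDescent at hi ⊢
    omega
  have h0 := cs.ne_zero_of_isLeftDescent hne hxi hxu
  obtain ⟨y, hy, hlen⟩ := cs.exists_eq_altWord_mul_of_isLeftDescent (n := M i u) hne.symm
    (Or.inr (M.symmetric i u).le) hxu hxi
  rw [altWord_eq_cons_rWord h0, wordProd_cons, mul_assoc] at hy
  refine ⟨i, y, hne, h0, mul_left_cancel hy, ?_⟩
  have := cs.length_simple_mul v u
  omega

theorem simple_mul_wordProd_flatten_rWord {k : ℕ} {i j : ℕ → B}
    (h0 : ∀ l < k + 1, M (i l) (j l) ≠ 0)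
    (hd : ∀ l, l + 1 < k + 1 → j (l + 1) = dIdx M (i l) (j l)) :
    cs.simple (j 0) *
        cs.wordProd (((List.range (k + 1)).map fun l => rWord M (i l) (j l)).flatten) =
      cs.wordProd (((List.range (k + 1)).map fun l => rWord M (i l) (j l)).flatten) *
        cs.simple (dIdx M (i k) (j k)) := by
  induction k with
  | zero => simpa using cs.simple_mul_wordProd_rWord (h0 0 one_pos)
  | succ k ih =>
    rw [List.range_succ, List.map_append, List.flatten_append, wordProd_append, ← mul_assoc,
      ih (fun l hl => h0 l (by omega)) (fun l hl => hd l (by omega)), mul_assoc,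
      ← hd k (by omega)]
    simp [simple_mul_wordProd_rWord cs (h0 (k + 1) (by omega)), mul_assoc]

theorem exists_rWord_decomposition {u w : B} {v : W} (huw : cs.simple u * v = v * cs.simple w)
    (hu : cs.length v ≤ cs.length (cs.simple u * v)) :
    (v = 1 ∧ u = w) ∨
      ∃ (k : ℕ), 1 ≤ k ∧ ∃ i j : ℕ → B,
        (∀ l < k, i l ≠ j l ∧ M (i l) (j l) ≠ 0) ∧
        v = cs.wordProd (((List.range k).map fun l => rWord M (i l) (j l)).flatten) ∧
        cs.IsReduced (((List.range k).map fun l => rWord M (i l) (j l)).flatten) ∧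
        u = j 0 ∧
        w = dIdx M (i (k - 1)) (j (k - 1)) ∧
        (∀ l, l + 1 < k →
          j (l + 1) = dIdx M (i l) (j l) ∧
          i (l + 1) ≠ i l ∧ i (l + 1) ≠ j l ∧
          bIdx M (i l) (j l) ≠ i (l + 1) ∧ bIdx M (i l) (j l) ≠ j (l + 1)) := by
  induction hn : cs.length v using Nat.strong_induction_on generalizing u v with
  | _ n ih =>
  subst hn
  by_cases hv : v = 1
  · subst hv
    exact Or.inl ⟨rfl, cs.simple_injective (by simpa using huw)⟩
  right
  obtain ⟨i₀, y, hne, h0, rfl, hlen⟩ := cs.exists_eq_rWord_mul huw hu hv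
  have h2 := M.two_le_of_ne hne h0
  have hyw : cs.simple (dIdx M i₀ u) * y = y * cs.simple w := by
    rw [← mul_assoc, simple_mul_wordProd_rWord cs h0, mul_assoc, mul_assoc] at huw
    exact mul_left_cancel huw
  have hly : cs.length y ≤ cs.length (cs.simple (dIdx M i₀ u) * y) := by
    have h3 := cs.length_mul_le (cs.wordProd (rWord M i₀ u)) (cs.simple (dIdx M i₀ u) * y)
    have h4 := cs.length_wordProd_le (rWord M i₀ u)
    rw [length_rWord] at h4
    rw [← mul_assoc, ← simple_mul_wordProd_rWord cs h0, mul_assoc] at h3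
    omega
  obtain ⟨rfl, hdw⟩ | ⟨k, hk, i, j, hij, hy, hred, hj, hw, hstep⟩ :=
    ih (cs.length y) (by omega) hyw hly rfl
  · refine ⟨1, le_rfl, fun _ => i₀, fun _ => u, fun _ _ => ⟨hne, h0⟩, by simp, ?_, rfl, hdw.symm,
      fun l hl => by omega⟩
    simpa [IsReduced, length_rWord] using hlen
  obtain ⟨k, rfl⟩ := Nat.exists_eq_add_of_le' hk
  have hdesc : cs.IsLeftDescent y (i 0) := by
    have hhd := rWord_eq_cons (hij 0 (by omega)).1 (hij 0 (by omega)).2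
    rw [List.range_succ_eq_map, List.map_cons, List.flatten_cons, hhd, List.cons_append] at hy hred
    have h3 := cs.length_wordProd_le ((altWord (j 0) (i 0) (M (i 0) (j 0) - 2)) ++
      ((List.map Nat.succ (List.range k)).map fun l => rWord M (i l) (j l)).flatten)
    have h4 := hred.eq
    rw [← hy, List.length_cons] at h4
    rw [IsLeftDescent]
    nth_rw 1 [hy]
    rw [wordProd_cons, simple_mul_simple_cancel_left]
    omega
  have hb := cs.bIdx_ne_of_isLeftDescent hne h0 hlen.ge hdesc
  have hi0 := (hij 0 (by omega)).1
  have hword : ((List.range (k + 1 + 1)).map fun l =>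
      rWord M ((fun l => Nat.casesOn l i₀ i : ℕ → B) l)
        ((fun l => Nat.casesOn l u j : ℕ → B) l)).flatten =
      rWord M i₀ u ++ ((List.range (k + 1)).map fun l => rWord M (i l) (j l)).flatten := by
    rw [List.range_succ_eq_map, List.map_cons, List.flatten_cons, List.map_map]
    rfl
  refine ⟨k + 1 + 1, by omega, fun l => Nat.casesOn l i₀ i, fun l => Nat.casesOn l u j,
    ?_, ?_, ?_, rfl, ?_, ?_⟩
  · rintro (_ | l) hl
    · exact ⟨hne, h0⟩
    · exact hij l (by omega)
  · rw [hword, wordProd_append, ← hy]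
  · rw [hword, IsReduced, wordProd_append, ← hy, hlen, List.length_append, length_rWord,
      ← hred.eq, ← hy]
  · exact hw
  · rintro (_ | l) hl
    · refine ⟨hj.symm, ?_⟩
      change i 0 ≠ i₀ ∧ i 0 ≠ u ∧ bIdx M i₀ u ≠ i 0 ∧ bIdx M i₀ u ≠ j 0
      rw [← hj] at hi0 ⊢
      unfold bIdx dIdx at *
      split_ifs at * <;> exact ⟨by tauto, by tauto, hb, by tauto⟩
    · exact hstep l (by omega)

end CoxeterSystem

end Dihedral

/-- Let `W = ⟨S|M⟩` be a finite rank Coxeter system, `u, w ∈ S` and `v ∈ W` with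
`|v| ≤ |uv|` and `|v| ≤ |vw|`.  Then `uv = vw` iff either `v = e` and `u = w`, or `v` has a
reduced expression `r_{i_1,j_1} ⋯ r_{i_k,j_k}` (`k ≥ 1`, `i_l ≠ j_l`, `m_{i_l,j_l} < ∞`)
with `u = c_{i_1,j_1}`, `w = d_{i_k,j_k}`, and for `l = 1, …, k−1`:
`c_{i_{l+1},j_{l+1}} = d_{i_l,j_l}`, `a_{i_{l+1},j_{l+1}} ∉ {s_{i_l}, s_{j_l}}` and
`b_{i_l,j_l} ∉ {s_{i_{l+1}}, s_{j_{l+1}}}`. -/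
theorem simple_mul_eq_mul_simple_iff_exists_rWord_decomposition
    {B : Type*} [Fintype B] {M : CoxeterMatrix B}
    {W : Type*} [Group W] (cs : CoxeterSystem M W)
    (u w : B) (v : W)
    (h₁ : cs.length v ≤ cs.length (cs.simple u * v))
    (h₂ : cs.length v ≤ cs.length (v * cs.simple w)) :
    cs.simple u * v = v * cs.simple w ↔
      ((v = 1 ∧ u = w) ∨
        ∃ (k : ℕ), 1 ≤ k ∧ ∃ i j : ℕ → B,
          (∀ l < k, i l ≠ j l ∧ M (i l) (j l) ≠ 0) ∧
          v = cs.wordProd (((List.range k).map fun l => rWord M (i l) (j l)).flatten) ∧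
          cs.IsReduced (((List.range k).map fun l => rWord M (i l) (j l)).flatten) ∧
          u = j 0 ∧
          w = dIdx M (i (k - 1)) (j (k - 1)) ∧
          (∀ l, l + 1 < k →
            j (l + 1) = dIdx M (i l) (j l) ∧
            i (l + 1) ≠ i l ∧ i (l + 1) ≠ j l ∧
            bIdx M (i l) (j l) ≠ i (l + 1) ∧ bIdx M (i l) (j l) ≠ j (l + 1))) := by
  constructor
  · intro h
    exact cs.exists_rWord_decomposition h h₁
  · rintro (⟨rfl, rfl⟩ | ⟨k, hk, i, j, hij, rfl, -, rfl, rfl, hstep⟩)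
    · simp
    · obtain ⟨k, rfl⟩ := Nat.exists_eq_add_of_le' hk
      exact cs.simple_mul_wordProd_flatten_rWord (fun l hl => (hij l hl).2)
        fun l hl => (hstep l hl).1
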